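/- arXiv:2507.08056 — 2 statements merged into one kernel-verified Lean document; each statement's English description precedes it below -/
import Mathlib

section
/- Let β ≠ 0 and Ω_{0m}, Ω_{0r} ∈ ℝ. Suppose E : (−1, ∞) → ℝ is differentiable, strictly positive, and satisfies β²·E(z)² = Ω_{0m}[(1+z)³ − 1] + (3Ω_{0r}/4)[(1+z)⁴ − 1] + β² for all z > −1. Then for every z > −1 the deceleration parameter q(z) := −1 + (1+z)·E'(z)/E(z) equals (1/(2E(z)²))·[ (3Ω_{0m}/β²)(1+z)³ + (3Ω_{0r}/β²)(1+z)⁴ ] − 1. -/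
/-! A power law `c * E ^ n = F` determines the logarithmic derivative of `E`: constants drop out of
logarithmic derivatives and powers become factors, so `n * E' / E = F' / F = F' / (c * E ^ n)`.
The Friedmann equation is the case `n = 2`, `c = β ^ 2`. -/

open scoped Topology

section

variable {𝕜 𝕜' : Type*} [NontriviallyNormedField 𝕜] [NontriviallyNormedField 𝕜']
  [NormedAlgebra 𝕜 𝕜']

theorem natCast_mul_logDeriv_of_const_mul_pow_eventuallyEq {E F : 𝕜 → 𝕜'} {c : 𝕜'} {z : 𝕜}
    {n : ℕ} (hc : c ≠ 0) (hE : DifferentiableAt 𝕜 E z) (hEF : (fun x ↦ c * E x ^ n) =ᶠ[𝓝 z] F) :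
    n * logDeriv E z = logDeriv F z :=
  calc n * logDeriv E z
      = logDeriv (fun x ↦ E x ^ n) z := (logDeriv_fun_pow hE n).symm
    _ = logDeriv (fun x ↦ c * E x ^ n) z := (logDeriv_const_mul z c hc).symm
    _ = logDeriv F z := (logDeriv_congr_nhds hEF).eq_of_nhds

theorem natCast_mul_div_of_const_mul_pow_eventuallyEq {E F : 𝕜 → 𝕜'} {E' F' c : 𝕜'} {z : 𝕜}
    {n : ℕ} (hc : c ≠ 0) (hE : HasDerivAt E E' z) (hF : HasDerivAt F F' z)
    (hEF : (fun x ↦ c * E x ^ n) =ᶠ[𝓝 z] F) :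
    n * (E' / E z) = F' / (c * E z ^ n) := by
  have hlog := natCast_mul_logDeriv_of_const_mul_pow_eventuallyEq hc hE.differentiableAt hEF
  rwa [logDeriv_apply, logDeriv_apply, hE.deriv, hF.deriv, ← hEF.eq_of_nhds] at hlog

theorem hasDerivAt_one_add_pow_sub_one (n : ℕ) (z : 𝕜) :
    HasDerivAt (fun x ↦ (1 + x) ^ n - 1) (n * (1 + z) ^ (n - 1)) z := by
  simpa only [mul_one] using (((hasDerivAt_id' z).const_add 1).fun_pow n).sub_const 1

variable [NeZero (2 : 𝕜)]

theorem hasDerivAt_friedmann_rhs (β Ωm Ωr z : 𝕜) :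
    HasDerivAt
      (fun x ↦ Ωm * ((1 + x) ^ 3 - 1) + (3 * Ωr / 4) * ((1 + x) ^ 4 - 1) + β ^ 2)
      (3 * Ωm * (1 + z) ^ 2 + 3 * Ωr * (1 + z) ^ 3) z := by
  have hfour : (4 : 𝕜) ≠ 0 := by
    rw [show (4 : 𝕜) = 2 * 2 by norm_num]
    exact mul_ne_zero two_ne_zero two_ne_zero
  have hmatter := (hasDerivAt_one_add_pow_sub_one 3 z).const_mul Ωm
  have hradiation := (hasDerivAt_one_add_pow_sub_one 4 z).const_mul (3 * Ωr / 4)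
  refine ((hmatter.fun_add hradiation).add_const (β ^ 2)).congr_deriv ?_
  push_cast
  field_simp

theorem deceleration_parameter_formula_general {β Ωm Ωr E' z : 𝕜} {E : 𝕜 → 𝕜} (hβ : β ≠ 0)
    (hE' : HasDerivAt E E' z) (hE : E z ≠ 0)
    (hfriedmann : ∀ᶠ x in 𝓝 z, β ^ 2 * E x ^ 2 =
      Ωm * ((1 + x) ^ 3 - 1) + (3 * Ωr / 4) * ((1 + x) ^ 4 - 1) + β ^ 2) :
    -1 + (1 + z) * E' / E z =
      (1 / (2 * E z ^ 2)) *
        ((3 * Ωm / β ^ 2) * (1 + z) ^ 3 + (3 * Ωr / β ^ 2) * (1 + z) ^ 4) - 1 := by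
  have hlog : 2 * (E' / E z) =
      (3 * Ωm * (1 + z) ^ 2 + 3 * Ωr * (1 + z) ^ 3) / (β ^ 2 * E z ^ 2) :=
    natCast_mul_div_of_const_mul_pow_eventuallyEq (n := 2) (pow_ne_zero 2 hβ) hE'
      (hasDerivAt_friedmann_rhs β Ωm Ωr z) hfriedmann
  field_simp at hlog ⊢
  linear_combination (1 + z) * hlog

end

/-- For a positive differentiable E on (−1, ∞) satisfying the modified Friedmann
equation, the deceleration parameter q(z) = −1 + (1+z)E'(z)/E(z) equals
(1/(2E²))[(3Ω₀m/β²)(1+z)³ + (3Ω₀r/β²)(1+z)⁴] − 1. -/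
theorem deceleration_parameter_formula (β Ω₀m Ω₀r : ℝ) (hβ : β ≠ 0)
    (E E' : ℝ → ℝ) (hE' : ∀ z : ℝ, z > -1 → HasDerivAt E (E' z) z)
    (hEpos : ∀ z : ℝ, z > -1 → 0 < E z)
    (heq : ∀ z : ℝ, z > -1 →
      β ^ 2 * (E z) ^ 2 =
        Ω₀m * ((1 + z) ^ 3 - 1) + (3 * Ω₀r / 4) * ((1 + z) ^ 4 - 1) + β ^ 2) :
    ∀ z : ℝ, z > -1 →
      -1 + (1 + z) * E' z / E z =
        (1 / (2 * (E z) ^ 2)) *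
          ((3 * Ω₀m / β ^ 2) * (1 + z) ^ 3 + (3 * Ω₀r / β ^ 2) * (1 + z) ^ 4) - 1 := by
  intro z hz
  exact deceleration_parameter_formula_general hβ (hE' z hz) (hEpos z hz).ne'
    ((eventually_gt_nhds hz).mono heq)
end

section
/- Let β, Ω_{0m} ∈ ℝ with 0 < Ω_{0m} < β², set Ω_{0r} = 0, and define on (−1, ∞) the functions E(z)² = ( Ω_{0m}[(1+z)³ − 1] + β² ) / β² and q(z) = (3Ω_{0m}/(2β²))·(1+z)³/E(z)² − 1. Then z_T = ( 2(β² − Ω_{0m})/Ω_{0m} )^{1/3} − 1 satisfies q(z_T) = 0, and z_T is the unique zero of q on (−1, ∞). Moreover q(z) < 0 for −1 < z < z_T and q(z) > 0 for z > z_T. -/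
open Set

/-!
The model has the background of flat ΛCDM with effective matter density `m = Ω₀m / β²`. There, `q`
is a positive multiple of `m (1 + z)³ - 2 (1 - m)`, so the expansion accelerates exactly while the
matter density is less than twice the vacuum density. Since `m (1 + z_T)³ = 2 (1 - m)`, the sign of
`q z` is that of `(1 + z)³ - (1 + z_T)³`, and cubing is strictly increasing.
-/

namespace FlatLCDM

/-- The squared dimensionless Hubble parameter `E²` of flat ΛCDM with present-day matter density
parameter `m`; flatness makes the vacuum density parameter `1 - m`. -/
noncomputable def hubbleSq (m z : ℝ) : ℝ :=
  m * (1 + z) ^ 3 + (1 - m)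

/-- The deceleration parameter `q` of flat ΛCDM. It has the junk value `-1` where
`hubbleSq m z = 0`. -/
noncomputable def deceleration (m z : ℝ) : ℝ :=
  3 * m / 2 * (1 + z) ^ 3 / hubbleSq m z - 1

/-- The redshift at which flat ΛCDM passes from deceleration to acceleration. The real power is the
cube root only for a nonnegative base, that is for `0 < m ≤ 1`. -/
noncomputable def transitionRedshift (m : ℝ) : ℝ :=
  (2 * (1 - m) / m) ^ ((1 : ℝ) / 3) - 1

section Rescaling

variable {b : ℝ} (Ω : ℝ)

lemma hubbleSq_div (hb : b ≠ 0) (z : ℝ) :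
    hubbleSq (Ω / b) z = (Ω * ((1 + z) ^ 3 - 1) + b) / b := by
  unfold hubbleSq
  field_simp
  ring

lemma deceleration_div (hb : b ≠ 0) (z : ℝ) :
    deceleration (Ω / b) z =
      3 * Ω / (2 * b) * (1 + z) ^ 3 / ((Ω * ((1 + z) ^ 3 - 1) + b) / b) - 1 := by
  rw [deceleration, hubbleSq_div Ω hb, mul_div_assoc', div_div, mul_comm b]

lemma transitionRedshift_div (hb : b ≠ 0) :
    transitionRedshift (Ω / b) = (2 * (b - Ω) / Ω) ^ ((1 : ℝ) / 3) - 1 := by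
  have hbase : 2 * (1 - Ω / b) / (Ω / b) = 2 * (b - Ω) / Ω := by field_simp
  rw [transitionRedshift, hbase]

end Rescaling

variable {m z : ℝ}

lemma hubbleSq_pos (hm₀ : 0 < m) (hm₁ : m ≤ 1) (hz : -1 < z) : 0 < hubbleSq m z := by
  have hz' : 0 < 1 + z := by linarith
  exact add_pos_of_pos_of_nonneg (by positivity) (sub_nonneg.2 hm₁)

lemma neg_one_lt_transitionRedshift (hm₀ : 0 < m) (hm₁ : m < 1) : -1 < transitionRedshift m := by
  have hbase : 0 < 2 * (1 - m) / m := div_pos (mul_pos two_pos (sub_pos.2 hm₁)) hm₀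
  rw [transitionRedshift, lt_sub_iff_add_lt, neg_add_cancel]
  exact Real.rpow_pos_of_pos hbase _

lemma mul_one_add_transitionRedshift_pow_three (hm₀ : 0 < m) (hm₁ : m ≤ 1) :
    m * (1 + transitionRedshift m) ^ 3 = 2 * (1 - m) := by
  have hbase : 0 ≤ 2 * (1 - m) / m := div_nonneg (mul_nonneg two_pos.le (sub_nonneg.2 hm₁)) hm₀.le
  have hcube : (1 + transitionRedshift m) ^ 3 = 2 * (1 - m) / m := by
    rw [transitionRedshift, add_sub_cancel, one_div]
    exact Real.rpow_inv_natCast_pow hbase three_ne_zero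
  rw [hcube, mul_div_cancel₀ _ hm₀.ne']

lemma deceleration_eq_matter_sub_vacuum (hE : hubbleSq m z ≠ 0) :
    deceleration m z = (m * (1 + z) ^ 3 - 2 * (1 - m)) / (2 * hubbleSq m z) := by
  rw [deceleration, div_sub_one hE, div_eq_div_iff hE (mul_ne_zero two_ne_zero hE)]
  unfold hubbleSq
  ring

lemma deceleration_eq_mul_cube_sub_cube (hm₀ : 0 < m) (hm₁ : m ≤ 1) (hE : hubbleSq m z ≠ 0) :
    deceleration m z =
      m / (2 * hubbleSq m z) * ((1 + z) ^ 3 - (1 + transitionRedshift m) ^ 3) := by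
  rw [deceleration_eq_matter_sub_vacuum hE, ← mul_one_add_transitionRedshift_pow_three hm₀ hm₁,
    ← mul_sub, mul_div_right_comm]

lemma deceleration_eq_zero_iff (hm₀ : 0 < m) (hm₁ : m ≤ 1) (hE : hubbleSq m z ≠ 0) :
    deceleration m z = 0 ↔ z = transitionRedshift m := by
  have hcoeff : m / (2 * hubbleSq m z) ≠ 0 := div_ne_zero hm₀.ne' (mul_ne_zero two_ne_zero hE)
  rw [deceleration_eq_mul_cube_sub_cube hm₀ hm₁ hE, mul_eq_zero_iff_left hcoeff, sub_eq_zero,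
    Odd.pow_inj (by decide), add_right_inj]

lemma deceleration_neg_iff (hm₀ : 0 < m) (hm₁ : m ≤ 1) (hE : 0 < hubbleSq m z) :
    deceleration m z < 0 ↔ z < transitionRedshift m := by
  have hcoeff : 0 < m / (2 * hubbleSq m z) := by positivity
  rw [deceleration_eq_mul_cube_sub_cube hm₀ hm₁ hE.ne', ← smul_eq_mul,
    smul_neg_iff_of_pos_left hcoeff, sub_neg, Odd.pow_lt_pow (by decide), add_lt_add_iff_left]

lemma deceleration_pos_iff (hm₀ : 0 < m) (hm₁ : m ≤ 1) (hE : 0 < hubbleSq m z) :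
    0 < deceleration m z ↔ transitionRedshift m < z := by
  have hcoeff : 0 < m / (2 * hubbleSq m z) := by positivity
  rw [deceleration_eq_mul_cube_sub_cube hm₀ hm₁ hE.ne', mul_pos_iff_of_pos_left hcoeff, sub_pos,
    Odd.pow_lt_pow (by decide), add_lt_add_iff_left]

end FlatLCDM

/-- With radiation neglected (Ω₀r = 0) and 0 < Ω₀m < β², the transition redshift
z_T = (2(β² − Ω₀m)/Ω₀m)^{1/3} − 1 is the unique zero of the deceleration
parameter q on (−1, ∞); moreover q < 0 below z_T and q > 0 above z_T. -/
theorem transition_redshift (β Ω₀m : ℝ) (hΩm : 0 < Ω₀m) (hΩmβ : Ω₀m < β ^ 2)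
    (E2 : ℝ → ℝ) (hE2 : ∀ z : ℝ, E2 z = (Ω₀m * ((1 + z) ^ 3 - 1) + β ^ 2) / β ^ 2)
    (q : ℝ → ℝ)
    (hq : ∀ z : ℝ, q z = (3 * Ω₀m / (2 * β ^ 2)) * (1 + z) ^ 3 / E2 z - 1)
    (zT : ℝ) (hzT : zT = (2 * (β ^ 2 - Ω₀m) / Ω₀m) ^ ((1 : ℝ) / 3) - 1) :
    q zT = 0 ∧
    (∀ z : ℝ, z > -1 → q z = 0 → z = zT) ∧
    (∀ z ∈ Ioo (-1 : ℝ) zT, q z < 0) ∧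
    (∀ z : ℝ, z > zT → 0 < q z) := by
  have hβ : 0 < β ^ 2 := hΩm.trans hΩmβ
  have hm₀ : 0 < Ω₀m / β ^ 2 := div_pos hΩm hβ
  have hm₁ : Ω₀m / β ^ 2 < 1 := (div_lt_one hβ).2 hΩmβ
  have hE : ∀ {z : ℝ}, -1 < z → 0 < FlatLCDM.hubbleSq (Ω₀m / β ^ 2) z :=
    FlatLCDM.hubbleSq_pos hm₀ hm₁.le
  have hq' : ∀ z, q z = FlatLCDM.deceleration (Ω₀m / β ^ 2) z := fun z ↦ by
    rw [hq, hE2, FlatLCDM.deceleration_div Ω₀m hβ.ne']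
  rw [← FlatLCDM.transitionRedshift_div Ω₀m hβ.ne'] at hzT
  have hzT₁ : -1 < zT := hzT ▸ FlatLCDM.neg_one_lt_transitionRedshift hm₀ hm₁
  simp only [hq']
  refine ⟨?_, fun z hz hz₀ ↦ ?_, fun z hz ↦ ?_, fun z hz ↦ ?_⟩
  · exact (FlatLCDM.deceleration_eq_zero_iff hm₀ hm₁.le (hE hzT₁).ne').2 hzT
  · exact ((FlatLCDM.deceleration_eq_zero_iff hm₀ hm₁.le (hE hz).ne').1 hz₀).trans hzT.symm
  · exact (FlatLCDM.deceleration_neg_iff hm₀ hm₁.le (hE hz.1)).2 (hzT ▸ hz.2)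
  · exact (FlatLCDM.deceleration_pos_iff hm₀ hm₁.le (hE (hzT₁.trans hz))).2 (hzT ▸ hz)
end
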